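/- For n ∈ ℕ let J(q,n) = Σ_{k=0}^n q^{nk}·(q^{−n−1}; q^{−1})_k·(q^{−n+1}; q)_k ∈ ℂ(q) be the colored Jones function of the figure-eight knot. Then there exist real numbers A and B such that for all n ∈ ℕ with J(q,n) ≠ 0, ord_q J(q,n) ≥ −n(n−1) − A·n − B. -/

import Mathlib

/-- The q-Pochhammer symbol `(a; p)_k = ∏_{j=0}^{k-1} (1 - a·pʲ)` in `ℂ(q)`. -/
noncomputable def qPoch (a p : RatFunc ℂ) (k : ℕ) : RatFunc ℂ :=
  ∏ j ∈ Finset.range k, (1 - a * p ^ j)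

/-- The colored Jones function of the figure-eight knot:
`J(q,n) = ∑_{k=0}^n q^{nk}·(q^{-n-1}; q^{-1})_k·(q^{-n+1}; q)_k ∈ ℂ(q)`. -/
noncomputable def coloredJones (n : ℕ) : RatFunc ℂ :=
  ∑ k ∈ Finset.range (n + 1),
    RatFunc.X ^ (n * k) *
      qPoch ((RatFunc.X : RatFunc ℂ) ^ (-(n : ℤ) - 1)) ((RatFunc.X : RatFunc ℂ) ^ (-1 : ℤ)) k *
      qPoch ((RatFunc.X : RatFunc ℂ) ^ (-(n : ℤ) + 1)) RatFunc.X k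

/-- Order of vanishing at `q = 0` of a rational function `f ∈ ℂ(q)`. -/
noncomputable def ordQ (f : RatFunc ℂ) : ℤ :=
  (Polynomial.rootMultiplicity 0 f.num : ℤ) - Polynomial.rootMultiplicity 0 f.denom

/-- `f` is a polynomial times `q^m`. -/
def OrdGE (m : ℤ) (f : RatFunc ℂ) : Prop :=
  ∃ p : Polynomial ℂ, f = algebraMap (Polynomial ℂ) (RatFunc ℂ) p * (RatFunc.X : RatFunc ℂ) ^ m

lemma OrdGE.mul {a b : ℤ} {f g : RatFunc ℂ} (hf : OrdGE a f) (hg : OrdGE b g) :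
    OrdGE (a + b) (f * g) := by
  obtain ⟨p, rfl⟩ := hf
  obtain ⟨r, rfl⟩ := hg
  refine ⟨p * r, ?_⟩
  rw [zpow_add₀ RatFunc.X_ne_zero, map_mul]
  ring

lemma OrdGE.zero (a : ℤ) : OrdGE a 0 := ⟨0, by simp⟩

lemma OrdGE.add {a : ℤ} {f g : RatFunc ℂ} (hf : OrdGE a f) (hg : OrdGE a g) :
    OrdGE a (f + g) := by
  obtain ⟨p, rfl⟩ := hf
  obtain ⟨r, rfl⟩ := hg
  exact ⟨p + r, by rw [map_add]; ring⟩

lemma OrdGE.sub {a : ℤ} {f g : RatFunc ℂ} (hf : OrdGE a f) (hg : OrdGE a g) :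
    OrdGE a (f - g) := by
  obtain ⟨p, rfl⟩ := hf
  obtain ⟨r, rfl⟩ := hg
  exact ⟨p - r, by rw [map_sub]; ring⟩

lemma OrdGE.zpow (a : ℤ) : OrdGE a ((RatFunc.X : RatFunc ℂ) ^ a) := ⟨1, by simp⟩

lemma OrdGE.mono {a b : ℤ} {f : RatFunc ℂ} (hf : OrdGE a f) (h : b ≤ a) : OrdGE b f := by
  obtain ⟨p, rfl⟩ := hf
  obtain ⟨c, rfl⟩ := Int.le.dest h
  refine ⟨p * Polynomial.X ^ c, ?_⟩
  rw [zpow_add₀ RatFunc.X_ne_zero, map_mul, map_pow, RatFunc.algebraMap_X, zpow_natCast]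
  ring

lemma OrdGE.one_sub {a : ℤ} (h : a ≤ 0) : OrdGE a (1 - (RatFunc.X : RatFunc ℂ) ^ a) := by
  have h1 : OrdGE 0 (1 : RatFunc ℂ) := ⟨1, by simp⟩
  exact (h1.mono h).sub (OrdGE.zpow a)

lemma OrdGE.prod {a : ℤ} {k : ℕ} {f : ℕ → RatFunc ℂ} (h : ∀ j < k, OrdGE a (f j)) :
    OrdGE (a * k) (∏ j ∈ Finset.range k, f j) := by
  induction k with
  | zero => exact ⟨1, by simp⟩
  | succ k ih =>
    rw [Finset.prod_range_succ]
    have := (ih fun j hj => h j (by omega)).mul (h k (by omega))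
    convert this using 1
    push_cast
    ring

lemma OrdGE.sum {a : ℤ} {k : ℕ} {f : ℕ → RatFunc ℂ} (h : ∀ j < k, OrdGE a (f j)) :
    OrdGE a (∑ j ∈ Finset.range k, f j) := by
  induction k with
  | zero => simpa using OrdGE.zero a
  | succ k ih =>
    rw [Finset.sum_range_succ]
    exact (ih fun j hj => h j (by omega)).add (h k (by omega))

lemma OrdGE.le_ordQ {m : ℕ} {f : RatFunc ℂ} (hf : OrdGE (-(m : ℤ)) f) (h0 : f ≠ 0) :
    -(m : ℤ) ≤ ordQ f := by
  obtain ⟨p, hp⟩ := hf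
  have hd : algebraMap (Polynomial ℂ) (RatFunc ℂ) f.denom ≠ 0 :=
    RatFunc.algebraMap_ne_zero f.denom_ne_zero
  have hX : (RatFunc.X : RatFunc ℂ) ^ m ≠ 0 := pow_ne_zero _ RatFunc.X_ne_zero
  have key : f.num * Polynomial.X ^ m = p * f.denom := by
    apply RatFunc.algebraMap_injective ℂ
    rw [map_mul, map_mul, map_pow, RatFunc.algebraMap_X]
    have h1 := RatFunc.num_div_denom f
    rw [div_eq_iff hd] at h1
    rw [h1]
    nth_rewrite 1 [hp]
    rw [zpow_neg, zpow_natCast]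
    field_simp
  have hn : f.num ≠ 0 := RatFunc.num_ne_zero h0
  have hl : f.num * Polynomial.X ^ m ≠ 0 := mul_ne_zero hn (pow_ne_zero _ Polynomial.X_ne_zero)
  have hr : p * f.denom ≠ 0 := key ▸ hl
  have e := congrArg (Polynomial.rootMultiplicity 0) key
  rw [Polynomial.rootMultiplicity_mul hl, Polynomial.rootMultiplicity_mul hr] at e
  have hm : Polynomial.rootMultiplicity 0 ((Polynomial.X : Polynomial ℂ) ^ m) = m := by
    simpa using Polynomial.rootMultiplicity_X_sub_C_pow (0 : ℂ) m
  rw [hm] at e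
  unfold ordQ
  omega

lemma coloredJones_OrdGE (n : ℕ) : OrdGE (-((n * n : ℕ) : ℤ)) (coloredJones n) := by
  unfold coloredJones
  apply OrdGE.sum
  intro k hk
  rw [mul_assoc]
  unfold qPoch
  rw [← Finset.prod_mul_distrib]
  have hprod := OrdGE.prod (a := -2 * (n : ℤ)) (k := k)
    (f := fun j => (1 - (RatFunc.X : RatFunc ℂ) ^ (-(n : ℤ) - 1) * (RatFunc.X ^ (-1 : ℤ)) ^ j) *
      (1 - (RatFunc.X : RatFunc ℂ) ^ (-(n : ℤ) + 1) * RatFunc.X ^ j)) (by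
    intro j hj
    have e1 : (RatFunc.X : RatFunc ℂ) ^ (-(n : ℤ) - 1) * (RatFunc.X ^ (-1 : ℤ)) ^ j
        = RatFunc.X ^ (-(n : ℤ) - 1 - j) := by
      rw [← zpow_natCast, ← zpow_mul, ← zpow_add₀ RatFunc.X_ne_zero]
      congr 1
      ring
    have e2 : (RatFunc.X : RatFunc ℂ) ^ (-(n : ℤ) + 1) * RatFunc.X ^ j
        = RatFunc.X ^ (-(n : ℤ) + 1 + j) := by
      rw [← zpow_natCast, ← zpow_add₀ RatFunc.X_ne_zero]
    simp only [e1, e2]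
    refine ((OrdGE.one_sub ?_).mul (OrdGE.one_sub ?_)).mono ?_ <;> omega)
  have hX := OrdGE.zpow ((n * k : ℕ) : ℤ)
  rw [zpow_natCast] at hX
  refine (hX.mul hprod).mono ?_
  push_cast
  have : (k : ℤ) ≤ n := by omega
  nlinarith [mul_le_mul_of_nonneg_left this (Int.natCast_nonneg n)]

/-- The order at `q = 0` of the colored Jones polynomial of the figure-eight knot decreases
at most like `-n(n-1)` minus a linear term. -/
theorem coloredJones_ordQ_growth :
    ∃ A B : ℝ, ∀ n : ℕ, coloredJones n ≠ 0 →
      -((n : ℝ) * ((n : ℝ) - 1)) - A * n - B ≤ (ordQ (coloredJones n) : ℝ) := by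
  refine ⟨1, 0, fun n hn => ?_⟩
  have h := (coloredJones_OrdGE n).le_ordQ hn
  have h' : ((-((n * n : ℕ) : ℤ) : ℤ) : ℝ) ≤ (ordQ (coloredJones n) : ℝ) := by exact_mod_cast h
  push_cast at h'
  linarith
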